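/- Let (V, ω) be a symplectic vector space, let G be a compact subgroup of GL(V), and let ε : G → {±1} be a continuous homomorphism with ω(gv, gw) = ε(g) ω(v, w) for all g ∈ G and v, w ∈ V. Then the set 𝒥(ω)^G = {J ∈ End(V) : J is a complex structure compatible with ω and g ∘ J = ε(g) · J ∘ g for all g ∈ G}, equipped with the subspace topology from End(V), is nonempty and contractible. -/

import Mathlib

/-!
Existence: averaging over `G` gives a `G`-invariant inner product `b`, and `ω(v, w) = b(Av, w)`
defines an invertible `b`-skew `A` with `g A = ε(g) A g`. Then `T = -A²` is positive definite and
commutes with `G`, and `J = A T^(-1/2)` is the required complex structure. The operator `T^(-1/2)`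
is taken as a polynomial in `T` (`exists_inv_sqrt`), which makes its commutation with `A` and `G`
and its symmetry with respect to `ω` immediate.

Contractibility: fix `J₀ ∈ 𝒥(ω)^G`. The Cayley transform `J ↦ S = (J₀ + J)⁻¹ (J₀ - J)` has inverse
`S ↦ (1 + S) J₀ (1 + S)⁻¹` and identifies `𝒥(ω)^G` with the set of `G`-equivariant, `ω`-skew,
`J₀`-antilinear `S` of norm less than `1` for the inner product `ω(·, J₀ ·)`
(`isCayley_of_mem`, `IsCayley.mem`, `cayley_conj_eq`). The latter set is star-shaped about `0`, so
scaling `S` contracts `𝒥(ω)^G` onto `J₀`.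
-/

/-- The set `𝒥(ω)^G` of `ω`-compatible complex structures on `V` that are invariant under the
sesquisymplectic action of `G` (twisted by the character `ε`). -/
def compatJSet {V : Type*} [NormedAddCommGroup V] [NormedSpace ℝ V]
    (ω : V →ₗ[ℝ] V →ₗ[ℝ] ℝ) (G : Subgroup (V →L[ℝ] V)ˣ) (ε : G → ℝ) :
    Set (V →L[ℝ] V) :=
  {J | (∀ v, J (J v) = - v) ∧ (∀ v w, ω (J v) (J w) = ω v w) ∧
    (∀ v, v ≠ 0 → 0 < ω v (J v)) ∧
    ∀ (g : G) (v : V), ((g : (V →L[ℝ] V)ˣ) : V →L[ℝ] V) (J v)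
      = ε g • J (((g : (V →L[ℝ] V)ˣ) : V →L[ℝ] V) v)}

open Polynomial MeasureTheory

/-! ### Functional calculus of a symmetric endomorphism by polynomials -/

theorem aeval_apply_symm {V : Type*} [AddCommGroup V] [Module ℝ V]
    (B : V →ₗ[ℝ] V →ₗ[ℝ] ℝ) (T : V →ₗ[ℝ] V) (hT : ∀ v w, B (T v) w = B v (T w))
    (p : ℝ[X]) (v w : V) : B (aeval T p v) w = B v (aeval T p w) := by
  induction p using Polynomial.induction_on generalizing v w with
  | C a => simp [Algebra.algebraMap_eq_smul_one]
  | add p q hp hq => simp [hp, hq]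
  | monomial n a h =>
    have e : ∀ x, aeval T (C a * X ^ (n + 1)) x = aeval T (C a * X ^ n) (T x) := by
      intro x; simp [pow_succ]
    have e' : ∀ x, aeval T (C a * X ^ (n + 1)) x = T (aeval T (C a * X ^ n) x) := by
      intro x; simp [pow_succ']
    rw [e, e', h, hT]

theorem aeval_apply_comm {V : Type*} [AddCommGroup V] [Module ℝ V]
    (T g : V →ₗ[ℝ] V) (h : ∀ v, g (T v) = T (g v)) (p : ℝ[X]) (v : V) :
    g (aeval T p v) = aeval T p (g v) := by
  have hc : Commute g T := LinearMap.ext h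
  have : Commute g (aeval T p) := by
    induction p using Polynomial.induction_on' with
    | add p q hp hq => simpa using hp.add_right hq
    | monomial n a =>
      rw [aeval_monomial]
      exact (Algebra.commute_algebraMap_right a g).mul_right (hc.pow_right n)
  exact LinearMap.congr_fun this v

/-- The spectral theorem for an endomorphism symmetric with respect to a positive definite form,
stated without a norm on `V` so that it applies when `V` already carries an unrelated one. -/
theorem exists_eigenbasis {V : Type*} [AddCommGroup V] [Module ℝ V] [FiniteDimensional ℝ V]
    (b : V →ₗ[ℝ] V →ₗ[ℝ] ℝ) (bsymm : ∀ v w, b v w = b w v) (bpos : ∀ v, v ≠ 0 → 0 < b v v)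
    (T : V →ₗ[ℝ] V) (hT : ∀ v w, b (T v) w = b v (T w)) :
    ∃ (n : ℕ) (e : Module.Basis (Fin n) ℝ V) (μ : Fin n → ℝ), ∀ i, T (e i) = μ i • e i := by
  let c : InnerProductSpace.Core ℝ V :=
    { inner := fun v w => b v w
      conj_inner_symm := fun x y => by simpa using bsymm y x
      re_inner_nonneg := fun x => by
        by_cases hx : x = 0
        · simp [hx]
        · simpa using (bpos x hx).le
      add_left := fun x y z => by simp
      smul_left := fun x y r => by simp
      definite := fun x hx => by
        by_contra h
        exact (bpos x h).ne' hx }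
  let : NormedAddCommGroup V := c.toNormedAddCommGroup
  let : InnerProductSpace ℝ V := InnerProductSpace.ofCore c.toCore
  have hS : T.IsSymmetric := fun v w => hT v w
  refine ⟨_, (hS.eigenvectorBasis rfl).toBasis, hS.eigenvalues rfl, fun i => ?_⟩
  simp

/-- The inverse square root of a positive definite `T` is a polynomial in `T`. Being a polynomial,
it inherits from `T` commutation relations and symmetry with respect to bilinear forms. -/
theorem exists_inv_sqrt {V : Type*} [AddCommGroup V] [Module ℝ V] [FiniteDimensional ℝ V]
    (b : V →ₗ[ℝ] V →ₗ[ℝ] ℝ) (bsymm : ∀ v w, b v w = b w v) (bpos : ∀ v, v ≠ 0 → 0 < b v v)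
    (T : V →ₗ[ℝ] V) (hT : ∀ v w, b (T v) w = b v (T w)) (Tpos : ∀ v, v ≠ 0 → 0 < b v (T v)) :
    ∃ p : ℝ[X], (∀ v, aeval T p (aeval T p (T v)) = v) ∧
      ∀ v, v ≠ 0 → 0 < b v (T (aeval T p v)) := by
  obtain ⟨n, e, μ, he⟩ := exists_eigenbasis b bsymm bpos T hT
  have μpos : ∀ i, 0 < μ i := fun i => by
    have h := Tpos (e i) (e.ne_zero i)
    rw [he, map_smul, smul_eq_mul] at h
    exact pos_of_mul_pos_left h (bpos _ (e.ne_zero i)).le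
  -- Lagrange interpolation at the eigenvalues realizes any function of `T` as a polynomial.
  have key : ∀ f : ℝ → ℝ, ∃ p : ℝ[X], ∀ i, aeval T p (e i) = f (μ i) • e i := fun f => by
    refine ⟨Lagrange.interpolate (Finset.univ.image μ) id f, fun i => ?_⟩
    have hE : Module.End.HasEigenvector T (μ i) (e i) :=
      ⟨Module.End.mem_eigenspace_iff.2 (he i), e.ne_zero i⟩
    rw [Module.End.aeval_apply_of_hasEigenvector hE]
    have := Lagrange.eval_interpolate_at_node (s := Finset.univ.image μ) (v := id) (i := μ i) f
      (Function.injective_id.injOn) (by simp)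
    rw [id] at this
    rw [this]
  obtain ⟨p, hp⟩ := key fun x => (√x)⁻¹
  obtain ⟨q, hq⟩ := key fun x => √(√x)
  have h1 : (aeval T p) ∘ₗ (aeval T p) ∘ₗ T = LinearMap.id := e.ext fun i => by
    simp only [LinearMap.comp_apply, he, map_smul, hp, smul_smul, LinearMap.id_apply]
    have := Real.sqrt_pos.2 (μpos i)
    have h2 := Real.mul_self_sqrt (μpos i).le
    rw [mul_assoc, ← mul_inv, h2, mul_inv_cancel₀ (μpos i).ne', one_smul]
  have h2 : T ∘ₗ (aeval T p) = (aeval T q) ∘ₗ (aeval T q) := e.ext fun i => by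
    simp only [LinearMap.comp_apply, he, map_smul, hp, hq, smul_smul]
    have := Real.sqrt_pos.2 (μpos i)
    have h2 := Real.mul_self_sqrt (μpos i).le
    rw [Real.mul_self_sqrt this.le]
    congr 1
    field_simp
    linarith
  have h1' : ∀ v, aeval T p (aeval T p (T v)) = v := LinearMap.congr_fun h1
  have h2' : ∀ v, T (aeval T p v) = aeval T q (aeval T q v) := LinearMap.congr_fun h2
  -- `q(T)` is a symmetric square root of `T p(T)`, so the form of `T p(T)` is a `b`-square.
  refine ⟨p, h1', fun v hv => ?_⟩
  rw [h2', ← aeval_apply_symm b T hT]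
  refine bpos _ fun h0 => hv ?_
  have := h2' v
  rw [h0, map_zero, aeval_apply_comm T T (fun _ => rfl)] at this
  have hv' := h1' v
  rw [this, map_zero] at hv'
  exact hv'.symm

/-! ### Existence of an invariant compatible complex structure -/

/-- Averaging a Euclidean inner product over `G` with respect to Haar measure. -/
theorem exists_invariant_form {V : Type*} [NormedAddCommGroup V] [NormedSpace ℝ V]
    [FiniteDimensional ℝ V] (G : Subgroup (V →L[ℝ] V)ˣ) (hG : IsCompact (G : Set (V →L[ℝ] V)ˣ)) :
    ∃ b : V →ₗ[ℝ] V →ₗ[ℝ] ℝ, (∀ v w, b v w = b w v) ∧ (∀ v, v ≠ 0 → 0 < b v v) ∧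
      ∀ (g : G) (v w : V), b (((g : (V →L[ℝ] V)ˣ) : V →L[ℝ] V) v)
        (((g : (V →L[ℝ] V)ˣ) : V →L[ℝ] V) w) = b v w := by
  have : CompleteSpace V := FiniteDimensional.complete ℝ V
  have : CompactSpace G := isCompact_iff_compactSpace.1 hG
  let : MeasurableSpace G := borel G
  have : BorelSpace G := ⟨rfl⟩
  let μ : Measure G := Measure.haar
  let ψ : V ≃L[ℝ] EuclideanSpace ℝ (Fin (Module.finrank ℝ V)) := toEuclidean
  -- Acting by `g⁻¹` makes left invariance of the Haar measure the relevant one.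
  let a : G → V → V := fun g v => (((g⁻¹ : G) : (V →L[ℝ] V)ˣ) : V →L[ℝ] V) v
  have ha : ∀ v, Continuous fun g => a g v := fun v => by
    have : Continuous fun g : G => (((g⁻¹ : G) : (V →L[ℝ] V)ˣ) : V →L[ℝ] V) :=
      Units.continuous_val.comp (continuous_subtype_val.comp continuous_inv)
    exact this.clm_apply continuous_const
  let F : V → V → G → ℝ := fun v w g => inner ℝ (ψ (a g v)) (ψ (a g w))
  have hF : ∀ v w, Continuous (F v w) := fun v w =>
    (ψ.continuous.comp (ha v)).inner (ψ.continuous.comp (ha w))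
  have hI : ∀ v w, Integrable (F v w) μ := fun v w =>
    (hF v w).integrable_of_hasCompactSupport (HasCompactSupport.of_compactSpace _)
  let b : V →ₗ[ℝ] V →ₗ[ℝ] ℝ := LinearMap.mk₂ ℝ (fun v w => ∫ g, F v w g ∂μ)
    (fun v v' w => by
      rw [← integral_add (hI _ _) (hI _ _)]
      simp [F, a, inner_add_left])
    (fun c v w => by
      rw [smul_eq_mul, ← integral_const_mul]
      simp [F, a, inner_smul_left])
    (fun v w w' => by
      rw [← integral_add (hI _ _) (hI _ _)]
      simp [F, a, inner_add_right])
    (fun c v w => by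
      rw [smul_eq_mul, ← integral_const_mul]
      simp [F, a, inner_smul_right])
  refine ⟨b, fun v w => ?_, fun v hv => ?_, fun h v w => ?_⟩
  · change ∫ g, F v w g ∂μ = ∫ g, F w v g ∂μ
    simp only [F, real_inner_comm]
  · change 0 < ∫ g, F v v g ∂μ
    refine (hF v v).integral_pos_of_hasCompactSupport_nonneg_nonzero
      (HasCompactSupport.of_compactSpace _) (fun g => real_inner_self_nonneg) (x := 1) ?_
    simpa [F, a] using hv
  · change ∫ g, F _ _ g ∂μ = ∫ g, F v w g ∂μ
    rw [← integral_mul_left_eq_self (F v w) h⁻¹]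
    simp [F, a]

/-- With `b` an invariant inner product and `ω(v, w) = b(Av, w)`, the phase `A (-A²)^(-1/2)` of `A`
is an invariant compatible complex structure. -/
theorem compatJSet_nonempty {V : Type*} [NormedAddCommGroup V] [NormedSpace ℝ V]
    [FiniteDimensional ℝ V] (ω : V →ₗ[ℝ] V →ₗ[ℝ] ℝ) (halt : ∀ v, ω v v = 0)
    (hnd : ∀ v, (∀ w, ω v w = 0) → v = 0) (G : Subgroup (V →L[ℝ] V)ˣ)
    (hG : IsCompact (G : Set (V →L[ℝ] V)ˣ)) (ε : G → ℝ) (hεval : ∀ g : G, ε g = 1 ∨ ε g = -1)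
    (hsesq : ∀ (g : G) (v w : V),
      ω (((g : (V →L[ℝ] V)ˣ) : V →L[ℝ] V) v) (((g : (V →L[ℝ] V)ˣ) : V →L[ℝ] V) w)
        = ε g * ω v w) :
    (compatJSet ω G ε).Nonempty := by
  obtain ⟨b, bsymm, bpos, binv⟩ := exists_invariant_form G hG
  have hωanti : ∀ v w, ω v w = - ω w v := fun v w => by
    have := halt (v + w)
    simp [halt] at this
    linarith
  have bext : ∀ v v', (∀ w, b v w = b v' w) → v = v' := fun v v' h => by
    by_contra hne
    have := bpos (v - v') (sub_ne_zero.2 hne)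
    rw [LinearMap.map_sub₂, h, sub_self] at this
    exact lt_irrefl _ this
  have binj : Function.Injective b := fun v v' h => bext v v' fun w => by rw [h]
  let e : V ≃ₗ[ℝ] Module.Dual ℝ V :=
    LinearEquiv.ofInjectiveOfFinrankEq b binj (Subspace.dual_finrank_eq).symm
  let A : V →ₗ[ℝ] V := e.symm.toLinearMap ∘ₗ ω
  have hA : ∀ v w, b (A v) w = ω v w := fun v w => by
    have : e (A v) = ω v := e.apply_symm_apply _
    exact LinearMap.congr_fun this w
  have Askew : ∀ v w, b (A v) w = - b v (A w) := fun v w => by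
    rw [hA, hωanti, bsymm v, hA]
  have ωskew : ∀ v w, ω (A v) w = - ω v (A w) := fun v w => by
    rw [← hA, Askew, hA]
  have Ainj : ∀ v, A v = 0 → v = 0 := fun v hv => hnd v fun w => by
    rw [← hA, hv, map_zero, LinearMap.zero_apply]
  have Aequiv : ∀ (g : G) (v : V), ((g : (V →L[ℝ] V)ˣ) : V →L[ℝ] V) (A v)
      = ε g • A (((g : (V →L[ℝ] V)ˣ) : V →L[ℝ] V) v) := fun g v => by
    refine bext _ _ fun w => ?_
    obtain ⟨u, rfl⟩ : ∃ u, ((g : (V →L[ℝ] V)ˣ) : V →L[ℝ] V) u = w :=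
      ⟨(((g⁻¹ : G) : (V →L[ℝ] V)ˣ) : V →L[ℝ] V) w,
        DFunLike.congr_fun (Units.mul_inv (g : (V →L[ℝ] V)ˣ)) w⟩
    rw [binv, map_smul, LinearMap.smul_apply, hA, hA, hsesq, smul_eq_mul, ← mul_assoc]
    rcases hεval g with h | h <;> simp [h]
  let T : V →ₗ[ℝ] V := -(A ∘ₗ A)
  have hT : ∀ v, T v = - A (A v) := fun v => rfl
  obtain ⟨p, hp, hpos⟩ := exists_inv_sqrt b bsymm bpos T
    (fun v w => by simp [hT, Askew])
    (fun v hv => by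
      rw [hT, map_neg, ← Askew]
      exact bpos _ fun h => hv (Ainj v h))
  have hAp : ∀ v, A (aeval T p v) = aeval T p (A v) :=
    aeval_apply_comm T A (fun v => by simp [hT]) p
  have hωp : ∀ v w, ω (aeval T p v) w = ω v (aeval T p w) :=
    aeval_apply_symm ω T (fun v w => by simp [hT, ωskew]) p
  refine ⟨LinearMap.toContinuousLinearMap (A ∘ₗ aeval T p), fun v => ?_, fun v w => ?_,
    fun v hv => ?_, fun g v => ?_⟩ <;>
    simp only [LinearMap.coe_toContinuousLinearMap', LinearMap.comp_apply]
  · have := hp v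
    rw [hT, map_neg, map_neg] at this
    rw [hAp, hAp, hAp, ← neg_eq_iff_eq_neg, this]
  · have := hp w
    rw [hT, map_neg, map_neg] at this
    rw [ωskew, hωp, hAp, hAp, ← map_neg, this]
  · have := hpos v hv
    rwa [hT, map_neg, ← Askew, hA] at this
  · have hgT : ∀ v, ((g : (V →L[ℝ] V)ˣ) : V →L[ℝ] V) (T v)
        = T (((g : (V →L[ℝ] V)ˣ) : V →L[ℝ] V) v) := fun v => by
      rw [hT, hT, map_neg, Aequiv, Aequiv, map_smul, smul_smul]
      rcases hεval g with h | h <;> simp [h]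
    rw [Aequiv]
    congr 2
    exact aeval_apply_comm T (((g : (V →L[ℝ] V)ˣ) : V →L[ℝ] V) : V →ₗ[ℝ] V) hgT p v

/-! ### Cayley transform relative to a base point -/

theorem isUnit_of_ker_eq_zero {V : Type*} [NormedAddCommGroup V] [NormedSpace ℝ V]
    [FiniteDimensional ℝ V] (E : V →L[ℝ] V) (h : ∀ v, E v = 0 → v = 0) : IsUnit E := by
  have hi : Function.Injective (E : V →ₗ[ℝ] V) := (injective_iff_map_eq_zero _).2 h
  let e := LinearEquiv.ofInjectiveEndo (E : V →ₗ[ℝ] V) hi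
  refine ⟨ContinuousLinearEquiv.toUnit e.toContinuousLinearEquiv, ?_⟩
  ext v
  rfl

theorem inverse_apply_self {V : Type*} [NormedAddCommGroup V] [NormedSpace ℝ V]
    {E : V →L[ℝ] V} (hE : IsUnit E) (v : V) : Ring.inverse E (E v) = v := by
  have := Ring.inverse_mul_cancel E hE
  exact DFunLike.congr_fun this v

theorem self_apply_inverse {V : Type*} [NormedAddCommGroup V] [NormedSpace ℝ V]
    {E : V →L[ℝ] V} (hE : IsUnit E) (v : V) : E (Ring.inverse E v) = v := by
  have := Ring.mul_inverse_cancel E hE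
  exact DFunLike.congr_fun this v

/-- The image of `𝒥(ω)^G` under the Cayley transform at `J₀`: the `G`-equivariant, `ω`-skew,
`J₀`-antilinear endomorphisms that strictly decrease the norm of the inner product `ω(·, J₀ ·)`. -/
structure IsCayley {V : Type*} [NormedAddCommGroup V] [NormedSpace ℝ V]
    (ω : V →ₗ[ℝ] V →ₗ[ℝ] ℝ) (G : Subgroup (V →L[ℝ] V)ˣ) (J₀ S : V →L[ℝ] V) : Prop where
  anti : ∀ v, S (J₀ v) = - J₀ (S v)
  skew : ∀ v w, ω (S v) w = - ω v (S w)
  contr : ∀ v, v ≠ 0 → ω (S v) (J₀ (S v)) < ω v (J₀ v)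
  comm : ∀ (g : G) (v : V), ((g : (V →L[ℝ] V)ˣ) : V →L[ℝ] V) (S v)
      = S (((g : (V →L[ℝ] V)ˣ) : V →L[ℝ] V) v)

section
variable {V : Type*} [NormedAddCommGroup V] [NormedSpace ℝ V]
    {ω : V →ₗ[ℝ] V →ₗ[ℝ] ℝ} {G : Subgroup (V →L[ℝ] V)ˣ} {ε : G → ℝ} {J₀ J S : V →L[ℝ] V}

theorem apply_nonneg_of_mem (h : J ∈ compatJSet ω G ε) (v : V) : 0 ≤ ω v (J v) := by
  by_cases hv : v = 0
  · simp [hv]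
  · exact (h.2.2.1 v hv).le

theorem IsCayley.smul (h₀ : J₀ ∈ compatJSet ω G ε) (h : IsCayley ω G J₀ S) {t : ℝ}
    (ht0 : 0 ≤ t) (ht1 : t ≤ 1) : IsCayley ω G J₀ (t • S) where
  anti v := by simp [h.anti]
  skew v w := by simp [h.skew]
  contr v hv := by
    have h1 := h.contr v hv
    have h2 := apply_nonneg_of_mem h₀ (S v)
    simp only [smul_apply, map_smul, LinearMap.smul_apply, smul_eq_mul]
    have : t * t ≤ 1 := mul_le_one₀ ht1 ht0 ht1
    nlinarith
  comm g v := by simp [h.comm]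

theorem IsCayley.isUnit [FiniteDimensional ℝ V] (h : IsCayley ω G J₀ S) : IsUnit (1 + S) := by
  refine isUnit_of_ker_eq_zero _ fun v hv => ?_
  by_contra hv0
  have h1 := h.contr v hv0
  have h2 : S v = - v := by
    rw [eq_neg_iff_add_eq_zero, add_comm]; simpa using hv
  simp [h2] at h1

/-- The inverse Cayley transform is conjugation of `J₀` by `1 + S`. -/
theorem IsCayley.mem [FiniteDimensional ℝ V] (h₀ : J₀ ∈ compatJSet ω G ε) (h : IsCayley ω G J₀ S) :
    (1 + S) * J₀ * Ring.inverse (1 + S) ∈ compatJSet ω G ε := by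
  have hu := h.isUnit
  have hs : ∀ v, ∃ a, v = a + S a := fun v => ⟨_, (self_apply_inverse hu v).symm⟩
  have hJ : ∀ a, ((1 + S) * J₀ * Ring.inverse (1 + S)) (a + S a) = J₀ a + S (J₀ a) := fun a => by
    have := inverse_apply_self hu a
    simp only [add_apply, one_apply_eq_self] at this
    simp only [mul_apply_eq_comp, this, add_apply, one_apply_eq_self]
  obtain ⟨hsq, hω, hpos, hg⟩ := h₀
  have hE : ∀ a c, ω (a + S a) (c + S c) = ω a c + ω (S a) (S c) := fun a c => by
    simp only [map_add, LinearMap.add_apply, h.skew a c]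
    ring
  refine ⟨fun v => ?_, fun v w => ?_, fun v hv => ?_, fun g v => ?_⟩
  · obtain ⟨a, rfl⟩ := hs v
    rw [hJ, hJ, hsq]; simp; abel
  · obtain ⟨a, rfl⟩ := hs v
    obtain ⟨c, rfl⟩ := hs w
    rw [hJ, hJ, hE, hE]
    simp [h.anti, hω]
  · obtain ⟨a, rfl⟩ := hs v
    have ha : a ≠ 0 := by rintro rfl; simp at hv
    rw [hJ, hE, h.anti]
    have := h.contr a ha
    simp only [map_neg]; linarith
  · obtain ⟨a, rfl⟩ := hs v
    rw [hJ, map_add, map_add, h.comm, hg, h.comm, hJ, map_smul, smul_add]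

theorem isUnit_add [FiniteDimensional ℝ V] (h₀ : J₀ ∈ compatJSet ω G ε) (h : J ∈ compatJSet ω G ε) :
    IsUnit (J₀ + J) := by
  refine isUnit_of_ker_eq_zero _ fun v hv => ?_
  by_contra hv0
  have h1 := h₀.2.2.1 v hv0
  have h2 := h.2.2.1 v hv0
  have h3 : ω v ((J₀ + J) v) = 0 := by rw [hv, map_zero]
  simp only [add_apply, map_add] at h3
  linarith

/-- The Cayley transform `(J₀ + J)⁻¹ (J₀ - J)` of a compatible `J`. -/
theorem isCayley_of_mem [FiniteDimensional ℝ V] (halt : ∀ v, ω v v = 0)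
    (h₀ : J₀ ∈ compatJSet ω G ε) (h : J ∈ compatJSet ω G ε) :
    IsCayley ω G J₀ (Ring.inverse (J₀ + J) * (J₀ - J)) := by
  have hu := isUnit_add h₀ h
  have hs : ∀ v, ∃ a, v = J₀ a + J a := fun v => ⟨_, (self_apply_inverse hu v).symm⟩
  have hC : ∀ v, Ring.inverse (J₀ + J) (J₀ v + J v) = v := fun v => inverse_apply_self hu v
  -- `J₀ + J` and `J₀ - J` anticommute, which moves the inverse past `J₀ - J`.
  have hS : ∀ a, (Ring.inverse (J₀ + J) * (J₀ - J)) (J₀ a + J a) = J a - J₀ a := fun a => by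
    rw [← hC (J a - J₀ a), mul_apply_eq_comp]
    congr 1
    simp [h₀.1, h.1]
    abel
  have hanti : ∀ v w, ω v w = - ω w v := fun v w => by
    have := halt (v + w)
    simp [halt] at this
    linarith
  refine ⟨fun v => ?_, fun v w => ?_, fun v hv => ?_, fun g v => ?_⟩
  · obtain ⟨a, rfl⟩ := hs v
    rw [hS]
    have : J₀ (J₀ a + J a) = J₀ (J a) + J (J a) := by
      simp [h.1, h₀.1]; abel
    rw [this, hS]
    simp [h.1, h₀.1]; abel
  · obtain ⟨a, rfl⟩ := hs v
    obtain ⟨c, rfl⟩ := hs w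
    rw [hS, hS]
    simp only [map_add, map_sub, LinearMap.add_apply, LinearMap.sub_apply, h.2.1, h₀.2.1]
    ring
  · obtain ⟨a, rfl⟩ := hs v
    have ha : a ≠ 0 := by rintro rfl; simp at hv
    rw [hS]
    have hp := h.2.2.1 a ha
    simp only [map_add, map_sub, LinearMap.add_apply, LinearMap.sub_apply, h₀.2.1, h₀.1, map_neg]
    have := hanti (J a) a
    linarith
  · obtain ⟨a, rfl⟩ := hs v
    rw [hS, map_add, map_sub, h.2.2.2, h₀.2.2.2, ← smul_add, map_smul, hS, smul_sub]

theorem cayley_conj_eq [FiniteDimensional ℝ V]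
    (h₀ : J₀ ∈ compatJSet ω G ε) (h : J ∈ compatJSet ω G ε)
    (hc : IsCayley ω G J₀ (Ring.inverse (J₀ + J) * (J₀ - J))) :
    (1 + Ring.inverse (J₀ + J) * (J₀ - J)) * J₀ *
      Ring.inverse (1 + Ring.inverse (J₀ + J) * (J₀ - J)) = J := by
  have hu := isUnit_add h₀ h
  have hJ₀ : J₀ * J₀ = -1 := by ext v; simp [h₀.1]
  have hJ : J * J = -1 := by ext v; simp [h.1]
  have hE : (1 + Ring.inverse (J₀ + J) * (J₀ - J)) * (J₀ + J) = 2 * J := by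
    have : (J₀ - J) * (J₀ + J) = (J₀ + J) * (J - J₀) := by
      simp only [sub_mul, mul_add, add_mul, mul_sub, hJ₀, hJ]; abel
    rw [add_mul, mul_assoc, this, ← mul_assoc, Ring.inverse_mul_cancel _ hu]
    noncomm_ring
  have hconj : (1 + Ring.inverse (J₀ + J) * (J₀ - J)) * J₀ =
      J * (1 + Ring.inverse (J₀ + J) * (J₀ - J)) := by
    have hswap : J₀ * (J₀ + J) = (J₀ + J) * J := by
      simp only [mul_add, add_mul, hJ₀, hJ]; abel
    rw [← hu.mul_left_inj, mul_assoc, hswap, ← mul_assoc, hE, mul_assoc J, hE]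
    noncomm_ring
  rw [hconj, mul_assoc, Ring.mul_inverse_cancel _ hc.isUnit, mul_one]

end

theorem continuous_ring_inverse {X R : Type*} [TopologicalSpace X] [NormedRing R]
    [CompleteSpace R] {f : X → R} (hf : Continuous f) (hu : ∀ x, IsUnit (f x)) :
    Continuous fun x => Ring.inverse (f x) := by
  rw [continuous_iff_continuousAt]
  intro x
  obtain ⟨u, hux⟩ := hu x
  have h : ContinuousAt Ring.inverse (f x) := hux ▸ NormedRing.inverse_continuousAt u
  exact ContinuousAt.comp (f := f) h hf.continuousAt

/-- For a compact subgroup `G` of `GL(V)` acting sesquisymplectically on the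
symplectic vector space `(V, ω)` relative to a continuous character `ε : G → {±1}`, the space
`𝒥(ω)^G` of invariant compatible complex structures (with the subspace topology from `End(V)`)
is nonempty and contractible. -/
theorem stmt5 {V : Type*} [NormedAddCommGroup V] [NormedSpace ℝ V] [FiniteDimensional ℝ V]
    (ω : V →ₗ[ℝ] V →ₗ[ℝ] ℝ)
    (halt : ∀ v, ω v v = 0)
    (hnd : ∀ v, (∀ w, ω v w = 0) → v = 0)
    (G : Subgroup (V →L[ℝ] V)ˣ)
    (hG : IsCompact (G : Set (V →L[ℝ] V)ˣ))
    (ε : G → ℝ) (hεcont : Continuous ε)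
    (hεmul : ∀ g h : G, ε (g * h) = ε g * ε h)
    (hεval : ∀ g : G, ε g = 1 ∨ ε g = -1)
    (hsesq : ∀ (g : G) (v w : V),
      ω (((g : (V →L[ℝ] V)ˣ) : V →L[ℝ] V) v) (((g : (V →L[ℝ] V)ˣ) : V →L[ℝ] V) w)
        = ε g * ω v w) :
    (compatJSet ω G ε).Nonempty ∧ ContractibleSpace (compatJSet ω G ε) := by
  obtain ⟨J₀, h₀⟩ := compatJSet_nonempty ω halt hnd G hG ε hεval hsesq
  refine ⟨⟨J₀, h₀⟩, ?_⟩
  have : CompleteSpace V := FiniteDimensional.complete ℝ V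
  rw [contractible_iff_id_nullhomotopic]
  let S : compatJSet ω G ε → (V →L[ℝ] V) := fun J => Ring.inverse (J₀ + J.1) * (J₀ - J.1)
  have hS : ∀ J, IsCayley ω G J₀ (S J) := fun J => isCayley_of_mem halt h₀ J.2
  have hSc : Continuous S :=
    (continuous_ring_inverse (continuous_const.add continuous_subtype_val)
      fun J => isUnit_add h₀ J.2).mul (continuous_const.sub continuous_subtype_val)
  have hSt : ∀ x : unitInterval × compatJSet ω G ε, IsCayley ω G J₀ ((x.1 : ℝ) • S x.2) :=
    fun x => (hS x.2).smul h₀ x.1.2.1 x.1.2.2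
  have hE : Continuous fun x : unitInterval × compatJSet ω G ε => 1 + (x.1 : ℝ) • S x.2 :=
    continuous_const.add
      ((continuous_subtype_val.comp continuous_fst).smul (hSc.comp continuous_snd))
  -- Scaling the Cayley transform from `0` to `1` contracts onto the base point `J₀`.
  let H : ContinuousMap.Homotopy (ContinuousMap.const (compatJSet ω G ε)
      (⟨J₀, h₀⟩ : compatJSet ω G ε)) (ContinuousMap.id (compatJSet ω G ε)) :=
    { toFun := fun x => ⟨(1 + (x.1 : ℝ) • S x.2) * J₀ * Ring.inverse (1 + (x.1 : ℝ) • S x.2),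
        (hSt x).mem h₀⟩
      continuous_toFun := ((hE.mul continuous_const).mul
        (continuous_ring_inverse hE fun x => (hSt x).isUnit)).subtype_mk _
      map_zero_left := fun J => Subtype.ext (by simp)
      map_one_left := fun J => Subtype.ext (by
        simpa using cayley_conj_eq h₀ J.2 (hS J)) }
  exact ⟨⟨J₀, h₀⟩, ⟨H.symm⟩⟩
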